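/- Let I ⊆ ℝ be an open interval, let a, b, c, d : ℝ → ℝ with a(t) ≠ 0 on I and a, d differentiable, and let μ₀, γ₀ : ℝ → ℝ be differentiable on I with μ₀(t) ≠ 0 on I. Suppose that α₀ := μ₀'/(4aμ₀) − d/(2a) satisfies α₀' + b + 2cα₀ + 4aα₀² = 0 on I, that β₀ : I → ℝ is differentiable with β₀' + (c + 4aα₀)β₀ = 0 and γ₀' + a·β₀² = 0 on I, and let c₀, M₀ ∈ ℝ with c₀ + γ₀(t) ≠ 0 on I. Define α := α₀ − β₀²/(4(c₀ + γ₀)) and μ := 2M₀·μ₀·(c₀ + γ₀). Then μ'(t) = (4a(t)α(t) + 2d(t))·μ(t) for all t ∈ I. -/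

import Mathlib

/-!
Solutions of `x' = p x` multiply: their coefficients `p` add up. The substitution says that `μ₀` has
coefficient `4aα₀ + 2d`, while `γ₀' = -aβ₀²` says that `c₀ + γ₀` has coefficient
`-aβ₀² / (c₀ + γ₀) = 4a(α - α₀)`. Hence `μ₀ (c₀ + γ₀)` has coefficient `4aα + 2d`.
-/

theorem four_ne_zero_of_neZero_two (R : Type*) [Semiring R] [NoZeroDivisors R] [NeZero (2 : R)] :
    (4 : R) ≠ 0 := by
  rw [← two_add_two_eq_four, ← two_mul]
  exact mul_ne_zero two_ne_zero two_ne_zero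

theorem eq_div_sub_div_iff_eq_mul {K : Type*} [Field K] [NeZero (2 : K)] {a d m m' x : K}
    (ha : a ≠ 0) (hm : m ≠ 0) :
    x = m' / (4 * a * m) - d / (2 * a) ↔ m' = (4 * a * x + 2 * d) * m := by
  have four_ne : (4 : K) ≠ 0 := four_ne_zero_of_neZero_two K
  have denom_ne : 4 * a * m ≠ 0 := mul_ne_zero (mul_ne_zero four_ne ha) hm
  have half_d : d / (2 * a) = 2 * d * m / (4 * a * m) := by
    rw [← mul_div_mul_right d (2 * a) (mul_ne_zero two_ne_zero hm)]
    ring_nf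
  rw [half_d, ← sub_div, eq_div_iff denom_ne, eq_sub_iff_add_eq, eq_comm]
  ring_nf

section LinearODE

variable {𝕜 : Type*} [NontriviallyNormedField 𝕜] {t : 𝕜}

theorem hasDerivAt_mul_of_linear {f g : 𝕜 → 𝕜} {p q : 𝕜}
    (hf : HasDerivAt f (p * f t) t) (hg : HasDerivAt g (q * g t) t) :
    HasDerivAt (fun s ↦ f s * g s) ((p + q) * (f t * g t)) t :=
  (hf.mul hg).congr_deriv (by ring)

theorem hasDerivAt_const_mul_of_linear {f : 𝕜 → 𝕜} {p : 𝕜} (k : 𝕜)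
    (hf : HasDerivAt f (p * f t) t) :
    HasDerivAt (fun s ↦ k * f s) (p * (k * f t)) t :=
  (hf.const_mul k).congr_deriv (by ring)

theorem hasDerivAt_const_add_of_ne_zero {γ : 𝕜 → 𝕜} {γ' k : 𝕜}
    (hγ : HasDerivAt γ γ' t) (hne : k + γ t ≠ 0) :
    HasDerivAt (fun s ↦ k + γ s) (γ' / (k + γ t) * (k + γ t)) t :=
  (hγ.const_add k).congr_deriv (div_mul_cancel₀ γ' hne).symm

end LinearODE

theorem stmt_11_general {𝕜 : Type*} [NontriviallyNormedField 𝕜] [NeZero (2 : 𝕜)] {I : Set 𝕜}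
    {a d μ₀ γ₀ α₀ β₀ α μ : 𝕜 → 𝕜} {c₀ M₀ : 𝕜}
    (ha : ∀ t ∈ I, a t ≠ 0)
    (hμ₀ : ∀ t ∈ I, DifferentiableAt 𝕜 μ₀ t) (hμ₀_ne : ∀ t ∈ I, μ₀ t ≠ 0)
    (hα₀ : ∀ t ∈ I, α₀ t = deriv μ₀ t / (4 * a t * μ₀ t) - d t / (2 * a t))
    (hγ₀ : ∀ t ∈ I, HasDerivAt γ₀ (-(a t * β₀ t ^ 2)) t) (hne : ∀ t ∈ I, c₀ + γ₀ t ≠ 0)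
    (hα : ∀ t ∈ I, α t = α₀ t - β₀ t ^ 2 / (4 * (c₀ + γ₀ t)))
    (hμ : ∀ t, μ t = 2 * M₀ * μ₀ t * (c₀ + γ₀ t)) :
    ∀ t ∈ I, HasDerivAt μ ((4 * a t * α t + 2 * d t) * μ t) t := by
  intro t ht
  have μ₀_linear : HasDerivAt μ₀ ((4 * a t * α₀ t + 2 * d t) * μ₀ t) t :=
    (hμ₀ t ht).hasDerivAt.congr_deriv
      ((eq_div_sub_div_iff_eq_mul (ha t ht) (hμ₀_ne t ht)).1 (hα₀ t ht))
  have shift_linear := hasDerivAt_const_add_of_ne_zero (hγ₀ t ht) (hne t ht)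
  have coeff_add : 4 * a t * α₀ t + 2 * d t + -(a t * β₀ t ^ 2) / (c₀ + γ₀ t)
      = 4 * a t * α t + 2 * d t := by
    have four_ne : (4 : 𝕜) ≠ 0 := four_ne_zero_of_neZero_two 𝕜
    have shift_ne := hne t ht
    rw [hα t ht]
    field_simp
    ring
  have product_linear := hasDerivAt_mul_of_linear
    (hasDerivAt_const_mul_of_linear (2 * M₀) μ₀_linear) shift_linear
  rwa [coeff_add, ← hμ, ← funext hμ] at product_linear

/-- Verification of the formula μ = 2μ(0)μ₀(t)(α(0) + γ₀(t)): the built μ satisfies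
μ' = (4aα + 2d)μ. -/
theorem stmt_11
    (I : Set ℝ) (hIopen : IsOpen I) (hIconn : I.OrdConnected)
    (a b c d : ℝ → ℝ)
    (ha : ∀ t ∈ I, DifferentiableAt ℝ a t) (hdd : ∀ t ∈ I, DifferentiableAt ℝ d t)
    (hane : ∀ t ∈ I, a t ≠ 0)
    (μ₀ γ₀ : ℝ → ℝ)
    (hμ₀ : ∀ t ∈ I, DifferentiableAt ℝ μ₀ t)
    (hγ₀ : ∀ t ∈ I, DifferentiableAt ℝ γ₀ t)
    (hμ₀ne : ∀ t ∈ I, μ₀ t ≠ 0)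
    (α₀ : ℝ → ℝ)
    (hα₀def : ∀ t, α₀ t = deriv μ₀ t / (4 * a t * μ₀ t) - d t / (2 * a t))
    (hα₀ric : ∀ t ∈ I, deriv α₀ t + b t + 2 * c t * α₀ t + 4 * a t * α₀ t ^ 2 = 0)
    (β₀ : ℝ → ℝ)
    (hβ₀diff : ∀ t ∈ I, DifferentiableAt ℝ β₀ t)
    (hβ₀ : ∀ t ∈ I, deriv β₀ t + (c t + 4 * a t * α₀ t) * β₀ t = 0)
    (hγ₀ode : ∀ t ∈ I, deriv γ₀ t + a t * β₀ t ^ 2 = 0)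
    (c₀ M₀ : ℝ) (hne : ∀ t ∈ I, c₀ + γ₀ t ≠ 0)
    (α μ : ℝ → ℝ)
    (hα : ∀ t, α t = α₀ t - β₀ t ^ 2 / (4 * (c₀ + γ₀ t)))
    (hμ : ∀ t, μ t = 2 * M₀ * μ₀ t * (c₀ + γ₀ t)) :
    ∀ t ∈ I, deriv μ t = (4 * a t * α t + 2 * d t) * μ t :=
  fun t ht ↦ (stmt_11_general hane hμ₀ hμ₀ne (fun s _ ↦ hα₀def s)
    (fun s hs ↦ (hγ₀ s hs).hasDerivAt.congr_deriv (eq_neg_of_add_eq_zero_left (hγ₀ode s hs)))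
    hne (fun s _ ↦ hα s) hμ t ht).deriv
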